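/- arXiv:2412.13619 — 2 statements merged into one kernel-verified Lean document; each statement's English description precedes it below -/
import Mathlib

section
/- Let each f_i : ℝ^d → ℝ (i = 1,…,n) be differentiable and convex (μ-strongly convex with μ = 0), satisfy the Hessian similarity condition with constant δ ≥ 0, let f = (1/n)∑ f_i, let x_* ∈ argmin f and f^* = min_{x∈ℝ^d} f(x). Let γ > 0 and p ∈ (0,1] satisfy [2(3−p)²/(p²(p+1))]·δ²γ² ≤ 1. Let (x_k, w_k)_{k≥0} be the L-SVRP process started from x_0 = w_0, and let x̄_{k+1} = E[x_{k+1} | x_k, w_k] denote the conditional average iterate. Then for every K ≥ 1, (1/K)·∑_{k=1}^K E[f(x̄_k)] − f^* ≤ ‖x_0 − x_*‖²/(2γK). -/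
/-! The potential `Φ(x, w) = ‖x - x⋆‖² + (p/2) ‖x - w‖²` decreases in conditional expectation by
at least `2γ (F(x̄) - F⋆)` at every step of L-SVRP (`lsvrp_potential_descent`); at the start
`x = w`, so telescoping (`telescope_histories`) leaves `‖x₀ - x⋆‖²` on the right-hand side.

For the descent, let `yᵢ` be the candidate next iterates, `x̄` their average, and
`ξᵢ = ∇fᵢ(w) - ∇F(w)`, which sum to zero.  Convexity of `fᵢ` at `yᵢ` together with the prox
optimality condition `γ ∇fᵢ(yᵢ) = x - yᵢ + γ ξᵢ`, and convexity at `x̄`, give on average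
`2γ (F(x̄) - F⋆) ≤ ‖x - x⋆‖² - ‖yᵢ - x⋆‖² - ‖x - yᵢ‖² + 2γ ⟪ξᵢ - (∇fᵢ(x̄) - ∇F(x̄)), yᵢ - x̄⟫`.
Young's inequality with weight `7/8` and Hessian similarity bound the last term by
`(8/7) γ² δ² ‖w - x̄‖² + (7/8) · average of ‖yᵢ - x̄‖²`.  The bias-variance decomposition of
`‖x - yᵢ‖²` and `‖yᵢ - w‖²` around `x̄` and the stepsize condition, used only in the form
`8 δ² γ² ≤ p² (p + 1)`, absorb what remains into `(p/2) ‖x - w‖²`. -/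

open RealInnerProductSpace Finset

section Helpers

variable {E : Type*} [NormedAddCommGroup E] [InnerProductSpace ℝ E]

/-- Optimality condition of the proximity operator. -/
lemma prox_gradient_eq [CompleteSpace E] {g : E → ℝ} {γ : ℝ} {x y : E}
    (hg : DifferentiableAt ℝ g y)
    (hmin : ∀ z, γ * g y + (1 / 2) * ‖y - x‖ ^ 2 ≤ γ * g z + (1 / 2) * ‖z - x‖ ^ 2) :
    γ • gradient g y = x - y := by
  have h1 : HasFDerivAt (fun z => γ * g z + (1 / 2) * ‖z - x‖ ^ 2)
      (γ • fderiv ℝ g y + (1 / 2 : ℝ) • (2 • (innerSL ℝ (y - x)).comp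
        (ContinuousLinearMap.id ℝ E))) y :=
    (hg.hasFDerivAt.const_mul γ).add
      ((((hasFDerivAt_id y).sub_const x).norm_sq).const_mul (1 / 2 : ℝ))
  have h2 : IsLocalMin (fun z => γ * g z + (1 / 2) * ‖z - x‖ ^ 2) y :=
    Filter.Eventually.of_forall hmin
  have h3 := h2.hasFDerivAt_eq_zero h1
  apply ext_inner_right ℝ
  intro v
  have h4 := congrArg (fun L => L v) h3
  simp only [_root_.add_apply, _root_.smul_apply,
    ContinuousLinearMap.comp_apply, ContinuousLinearMap.id_apply, innerSL_apply_apply,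
    _root_.zero_apply, smul_eq_mul, nsmul_eq_mul] at h4
  have h5 : ⟪gradient g y, v⟫ = fderiv ℝ g y v := by
    rw [gradient, InnerProductSpace.toDual_symm_apply]
  rw [inner_smul_left, h5, ← neg_sub y x, inner_neg_left]
  simp only [conj_trivial]
  push_cast at h4
  linarith

lemma sum_gradient_eq [CompleteSpace E] {n : ℕ} (hn : 0 < n) {f : Fin n → E → ℝ}
    (hdiff : ∀ i, Differentiable ℝ (f i)) (x : E) :
    ∑ i, gradient (f i) x
      = (n : ℝ) • gradient (fun x => (1 / (n : ℝ)) * ∑ i, f i x) x := by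
  have hn' : (n : ℝ) ≠ 0 := by positivity
  have h1 : HasFDerivAt (fun x => (1 / (n : ℝ)) * ∑ i, f i x)
      ((1 / (n : ℝ)) • ∑ i, fderiv ℝ (f i) x) x :=
    (HasFDerivAt.fun_sum fun i _ => (hdiff i x).hasFDerivAt).const_mul _
  simp only [gradient]
  rw [h1.fderiv, map_smul, map_sum, smul_smul, mul_one_div_cancel hn', one_smul]

/-- Contribution of a single index to the descent inequality.  The two trailing inner products
are linear in `ξ` and in `y - xb`, so they vanish once summed over all indices. -/
lemma descent_single {x w xs y xb ξ gb Gb : E} {γ p fy fs fb : ℝ}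
    (hγ : 0 < γ)
    (h1 : γ * (fy - fs) ≤ ⟪x - y + γ • ξ, y - xs⟫)
    (h2 : fb + ⟪gb, y - xb⟫ ≤ fy) :
    2 * γ * (fb - fs) + ‖y - xs‖ ^ 2 + (p / 2) * (1 - p) * ‖y - w‖ ^ 2
      ≤ ‖x - xs‖ ^ 2 - ‖x - xb‖ ^ 2 + (8 / 7) * γ ^ 2 * ‖ξ - (gb - Gb)‖ ^ 2
        + (p / 2) * (1 - p) * ‖xb - w‖ ^ 2
        + ⟪ξ, (2 * γ) • (xb - xs)⟫
        + ⟪y - xb, (2 : ℝ) • (x - xb) + (p * (1 - p)) • (xb - w) - (2 * γ) • Gb⟫ := by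
  have e1 : ‖x - xs‖ ^ 2 = ‖x - y‖ ^ 2 + 2 * ⟪x - y, y - xs⟫ + ‖y - xs‖ ^ 2 := by
    rw [← norm_add_sq_real]; congr 2; abel
  have e2 : ‖x - y‖ ^ 2 = ‖x - xb‖ ^ 2 - 2 * ⟪y - xb, x - xb⟫ + ‖y - xb‖ ^ 2 := by
    rw [real_inner_comm, ← norm_sub_sq_real]; congr 2; abel
  have e3 : ‖y - w‖ ^ 2 = ‖y - xb‖ ^ 2 + 2 * ⟪y - xb, xb - w⟫ + ‖xb - w‖ ^ 2 := by
    rw [← norm_add_sq_real]; congr 2; abel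
  have e4 : ⟪ξ, y - xs⟫ = ⟪ξ, y - xb⟫ + ⟪ξ, xb - xs⟫ := by
    rw [← inner_add_right]; congr 1; abel
  have e5 : ⟪ξ - (gb - Gb), y - xb⟫ = ⟪ξ, y - xb⟫ - ⟪gb, y - xb⟫ + ⟪y - xb, Gb⟫ := by
    rw [inner_sub_left, inner_sub_left, real_inner_comm Gb]; ring
  -- Young's inequality with weight `7/8`
  have e6 : 2 * γ * ⟪ξ - (gb - Gb), y - xb⟫
      ≤ (8 / 7) * γ ^ 2 * ‖ξ - (gb - Gb)‖ ^ 2 + (7 / 8) * ‖y - xb‖ ^ 2 := by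
    have hc := real_inner_le_norm (ξ - (gb - Gb)) (y - xb)
    have := mul_le_mul_of_nonneg_left hc (by positivity : 0 ≤ 2 * γ)
    nlinarith [sq_nonneg (8 / 7 * γ * ‖ξ - (gb - Gb)‖ - ‖y - xb‖)]
  have e7 : (p / 2) * (1 - p) * ‖y - xb‖ ^ 2 ≤ (1 / 8) * ‖y - xb‖ ^ 2 :=
    mul_le_mul_of_nonneg_right (by nlinarith [sq_nonneg (p - 1 / 2)]) (sq_nonneg _)
  have h3 := mul_le_mul_of_nonneg_left h2 hγ.le
  rw [inner_add_left, real_inner_smul_left] at h1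
  rw [inner_sub_right, inner_add_right, real_inner_smul_right, real_inner_smul_right,
    real_inner_smul_right, real_inner_smul_right, e3]
  rw [e4] at h1
  rw [e5] at e6
  linarith

/-- The displacement from the reference point to the average iterate is absorbed by the
potential difference. -/
lemma displacement_absorb {x w xb : E} {γ δ p : ℝ} (hp0 : 0 < p) (hp1 : p ≤ 1)
    (hB : 8 * (δ ^ 2 * γ ^ 2) ≤ p ^ 2 * (p + 1)) :
    (8 / 7) * γ ^ 2 * (δ ^ 2 * ‖w - xb‖ ^ 2) + (p / 2) * (1 - p) * ‖xb - w‖ ^ 2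
      ≤ ‖x - xb‖ ^ 2 + (p / 2) * ‖x - w‖ ^ 2 := by
  have e1 : ‖w - xb‖ = ‖xb - w‖ := norm_sub_rev _ _
  have e2 : ‖xb - w‖ ^ 2 = ‖x - w‖ ^ 2 - 2 * ⟪x - w, x - xb⟫ + ‖x - xb‖ ^ 2 := by
    rw [← norm_sub_sq_real]; congr 2; abel
  have e3 : 0 ≤ (p / 2) ^ 2 * ‖x - w‖ ^ 2 + 2 * (p / 2) * ⟪x - w, x - xb⟫ + ‖x - xb‖ ^ 2 := by
    have := norm_add_sq_real ((p / 2) • (x - w)) (x - xb)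
    rw [real_inner_smul_left, norm_smul, mul_pow, Real.norm_eq_abs, sq_abs] at this
    nlinarith [sq_nonneg ‖(p / 2) • (x - w) + (x - xb)‖]
  -- `c ‖u - v‖² ≤ (1 + c) (c ‖u‖² + ‖v‖²)` with `c = p / 2`
  have e4 : (p / 2) * ‖xb - w‖ ^ 2
      ≤ (1 + p / 2) * (‖x - xb‖ ^ 2 + (p / 2) * ‖x - w‖ ^ 2) := by
    rw [e2]; nlinarith
  have e5 : (1 + p / 2) * ((8 / 7) * (δ ^ 2 * γ ^ 2) + (p / 2) * (1 - p)) ≤ p / 2 := by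
    have : (1 + p / 2) * (8 * (δ ^ 2 * γ ^ 2)) ≤ (1 + p / 2) * (p ^ 2 * (p + 1)) :=
      mul_le_mul_of_nonneg_left hB (by positivity)
    have h2 : 0 ≤ p ^ 2 * (p + 1) * (1 - p) :=
      mul_nonneg (by positivity) (by linarith)
    have h3 : 0 ≤ p ^ 2 * (p + 1) := by positivity
    nlinarith
  have e6 := mul_le_mul_of_nonneg_right e5 (sq_nonneg ‖xb - w‖)
  rw [e1]
  have hpos : 0 < 1 + p / 2 := by positivity
  refine le_of_mul_le_mul_left ?_ hpos
  linarith

/-- Descent of the potential `‖x - x⋆‖² + (p/2) ‖x - w‖²` in one step of L-SVRP, with all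
averages over the sampled index multiplied by `n`. The coin contributes the factor `1 - p`,
because the distance to the reference point is reset to zero with probability `p`. -/
lemma lsvrp_potential_descent [CompleteSpace E] {n : ℕ} (hn : 0 < n) {f : Fin n → E → ℝ}
    {δ γ p : ℝ} (hγ : 0 < γ) (hp0 : 0 < p) (hp1 : p ≤ 1)
    (hdiff : ∀ i, Differentiable ℝ (f i)) {F : E → ℝ}
    (hF : F = fun x => (1 / (n : ℝ)) * ∑ i, f i x)
    (hcvx : ∀ i, ∀ x y : E, f i y ≥ f i x + ⟪gradient (f i) x, y - x⟫)
    (hsim : ∀ x y : E,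
      (1 / (n : ℝ)) * ∑ i, ‖gradient (f i) x - gradient (f i) y
          - (gradient F x - gradient F y)‖ ^ 2 ≤ δ ^ 2 * ‖x - y‖ ^ 2)
    (hB : 8 * (δ ^ 2 * γ ^ 2) ≤ p ^ 2 * (p + 1))
    (x w xs xb : E) (y : Fin n → E)
    (hy : ∀ i z, γ * f i (y i)
        + (1 / 2) * ‖y i - (x + γ • (gradient (f i) w - gradient F w))‖ ^ 2
      ≤ γ * f i z + (1 / 2) * ‖z - (x + γ • (gradient (f i) w - gradient F w))‖ ^ 2)
    (hxb : xb = (1 / (n : ℝ)) • ∑ i, y i) :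
    n * (2 * γ * (F xb - F xs))
        + ∑ i, (‖y i - xs‖ ^ 2 + (p / 2) * (1 - p) * ‖y i - w‖ ^ 2)
      ≤ n * (‖x - xs‖ ^ 2 + (p / 2) * ‖x - w‖ ^ 2) := by
  have hnpos : (0 : ℝ) < n := by exact_mod_cast hn
  have hFsum : ∀ z, (n : ℝ) * F z = ∑ i, f i z := by
    intro z; rw [hF]; field_simp
  have hgrad : ∀ z, ∑ i, gradient (f i) z = (n : ℝ) • gradient F z := by
    intro z; rw [hF]; exact sum_gradient_eq hn hdiff z
  have hξ : ∑ i, (gradient (f i) w - gradient F w) = 0 := by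
    rw [sum_sub_distrib, hgrad]; simp [← Nat.cast_smul_eq_nsmul ℝ]
  have hdev : ∑ i, (y i - xb) = 0 := by
    have : (n : ℝ) • xb = ∑ i, y i := by
      rw [hxb, smul_smul, mul_one_div_cancel hnpos.ne', one_smul]
    rw [sum_sub_distrib, ← this]; simp [← Nat.cast_smul_eq_nsmul ℝ]
  have hper := fun i => descent_single (x := x) (w := w) (xs := xs) (y := y i) (xb := xb)
    (ξ := gradient (f i) w - gradient F w) (gb := gradient (f i) xb) (Gb := gradient F xb)
    (p := p) (fy := f i (y i)) (fs := f i xs) (fb := f i xb) hγ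
    (by
      have h := mul_le_mul_of_nonneg_left (hcvx i (y i) xs) hγ.le
      have ho := prox_gradient_eq (hdiff i (y i)) (hy i)
      have h' : γ * ⟪gradient (f i) (y i), xs - y i⟫
          = -⟪x - y i + γ • (gradient (f i) w - gradient F w), y i - xs⟫ := by
        rw [← real_inner_smul_left, ho, ← inner_neg_right, neg_sub]
        congr 1; abel
      linarith)
    (hcvx i xb (y i))
  have hsum := sum_le_sum fun i (_ : i ∈ univ) => hper i
  have hs := hsim w xb
  have hs' : ∑ i, ‖gradient (f i) w - gradient F w - (gradient (f i) xb - gradient F xb)‖ ^ 2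
      ≤ n * (δ ^ 2 * ‖w - xb‖ ^ 2) := by
    have : ∀ i, gradient (f i) w - gradient F w - (gradient (f i) xb - gradient F xb)
        = gradient (f i) w - gradient (f i) xb - (gradient F w - gradient F xb) := by
      intro i; abel
    simp only [this]
    rwa [one_div, inv_mul_le_iff₀ hnpos] at hs
  simp only [sum_add_distrib, sum_sub_distrib, ← mul_sum, ← sum_inner, hξ, hdev,
    inner_zero_left, sum_const, card_univ, Fintype.card_fin, nsmul_eq_mul, ← hFsum] at hsum ⊢
  have habs := mul_le_mul_of_nonneg_left
    (displacement_absorb (x := x) (w := w) (xb := xb) hp0 hp1 hB) hnpos.le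
  have hs2 := mul_le_mul_of_nonneg_left hs' (by positivity : 0 ≤ (8 / 7) * γ ^ 2)
  linarith

end Helpers

/-- Expectation of `g` over histories of length `k` with independent draws of weights `q`. -/
noncomputable def histExp {α : Type*} [Fintype α] (q : α → ℝ) (k : ℕ) (g : List α → ℝ) : ℝ :=
  ∑ ω : Fin k → α, (∏ j, q (ω j)) * g (List.ofFn ω)

/-- Tower property: condition on the first `k` draws. -/
lemma histExp_succ {α : Type*} [Fintype α] (q : α → ℝ) (k : ℕ) (g : List α → ℝ) :
    histExp q (k + 1) g = histExp q k (fun l => ∑ a, q a * g (l ++ [a])) := by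
  unfold histExp
  rw [← (Fin.snocEquiv fun _ : Fin (k + 1) => α).sum_comp, Fintype.sum_prod_type,
    sum_comm]
  refine sum_congr rfl fun ω _ => ?_
  rw [mul_sum]
  refine sum_congr rfl fun a _ => ?_
  have hl : List.ofFn (Fin.snoc (α := fun _ => α) ω a : Fin (k + 1) → α)
      = List.ofFn ω ++ [a] := by
    rw [List.ofFn_succ', List.concat_eq_append]; simp
  simp only [Fin.snocEquiv, Equiv.coe_fn_mk, Fin.prod_univ_castSucc, Fin.snoc_castSucc,
    Fin.snoc_last, hl, mul_assoc]

lemma telescope_histories {α : Type*} [Fintype α] {q : α → ℝ} (hq : ∀ a, 0 ≤ q a)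
    (hq1 : ∑ a, q a = 1) {Φ G : List α → ℝ} {c Gs : ℝ}
    (h : ∀ l, c * (G l - Gs) + ∑ a, q a * Φ (l ++ [a]) ≤ Φ l) (K : ℕ) :
    c * (∑ k ∈ range K, histExp q k G - K * Gs) + histExp q K Φ ≤ Φ [] := by
  have hone : ∀ k, ∑ ω : Fin k → α, ∏ j, q (ω j) = 1 := by
    intro k
    have h1 : histExp q k (fun _ => 1) = 1 := by
      induction k with
      | zero => simp [histExp]
      | succ k ih => simpa [histExp_succ, hq1] using ih
    simpa [histExp] using h1
  induction K with
  | zero => simp [histExp]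
  | succ K ih =>
    have hstep : c * (histExp q K G - Gs) + histExp q (K + 1) Φ ≤ histExp q K Φ := by
      rw [histExp_succ]
      have e : c * (histExp q K G - Gs) + histExp q K (fun l => ∑ a, q a * Φ (l ++ [a]))
          = histExp q K (fun l => c * (G l - Gs) + ∑ a, q a * Φ (l ++ [a])) := by
        have : c * (histExp q K G - Gs)
            = c * (histExp q K G - (∑ ω : Fin K → α, ∏ j, q (ω j)) * Gs) := by
          rw [hone, one_mul]
        rw [this]
        unfold histExp
        rw [sum_mul, ← sum_sub_distrib, mul_sum, ← sum_add_distrib]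
        exact sum_congr rfl fun ω _ => by ring
      rw [e]
      exact sum_le_sum fun ω _ =>
        mul_le_mul_of_nonneg_left (h _) (prod_nonneg fun j _ => hq _)
    rw [sum_range_succ]
    push_cast
    linarith


/-- Corollary 2 of the paper: ergodic convergence of L-SVRP for convex functions.
The process is modelled by the deterministic map `state` applied to a finite history of
(sampled index, Bernoulli coin) draws; `xbar ω` is the conditional average iterate
`x̄_{k+1}` computed from the state after history `ω`; the expectation `E[f(x̄_k)]` is the
weighted sum over all histories of length `k − 1`. -/
theorem lsvrp_convex_ergodic_convergence
    (d n : ℕ) (hn : 0 < n)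
    (f : Fin n → EuclideanSpace ℝ (Fin d) → ℝ) (δ γ p : ℝ)
    (hδ : 0 ≤ δ) (hγ : 0 < γ) (hp0 : 0 < p) (hp1 : p ≤ 1)
    (hdiff : ∀ i, Differentiable ℝ (f i))
    (F : EuclideanSpace ℝ (Fin d) → ℝ)
    (hF : F = fun x => (1 / (n : ℝ)) * ∑ i, f i x)
    -- convexity (μ-strong convexity with μ = 0)
    (hcvx : ∀ i, ∀ x y : EuclideanSpace ℝ (Fin d),
      f i y ≥ f i x + ⟪gradient (f i) x, y - x⟫)
    (hsim : ∀ x y : EuclideanSpace ℝ (Fin d),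
      (1 / (n : ℝ)) * ∑ i, ‖gradient (f i) x - gradient (f i) y
          - (gradient F x - gradient F y)‖ ^ 2
        ≤ δ ^ 2 * ‖x - y‖ ^ 2)
    (xstar : EuclideanSpace ℝ (Fin d)) (hxstar : ∀ x, F xstar ≤ F x)
    (Fstar : ℝ) (hFstar : Fstar = F xstar)
    (hstep : (2 * (3 - p) ^ 2 / (p ^ 2 * (p + 1))) * δ ^ 2 * γ ^ 2 ≤ 1)
    -- the proximity operator of `γ f_i`
    (prox : Fin n → EuclideanSpace ℝ (Fin d) → EuclideanSpace ℝ (Fin d))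
    (hprox : ∀ i, ∀ x z : EuclideanSpace ℝ (Fin d),
      γ * f i (prox i x) + (1 / 2) * ‖prox i x - x‖ ^ 2
        ≤ γ * f i z + (1 / 2) * ‖z - x‖ ^ 2)
    -- the L-SVRP process, as a function of the history of random draws
    (x0 : EuclideanSpace ℝ (Fin d))
    (state : List (Fin n × Bool) →
      EuclideanSpace ℝ (Fin d) × EuclideanSpace ℝ (Fin d))
    (hstate0 : state [] = (x0, x0))
    (hstateS : ∀ (ω : List (Fin n × Bool)) (i : Fin n) (b : Bool),
      state (ω ++ [(i, b)]) =
        (prox i ((state ω).1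
            + γ • (gradient (f i) (state ω).2 - gradient F (state ω).2)),
         if b then
           prox i ((state ω).1
              + γ • (gradient (f i) (state ω).2 - gradient F (state ω).2))
         else (state ω).2))
    -- the conditional average iterate after history `ω`
    (xbar : List (Fin n × Bool) → EuclideanSpace ℝ (Fin d))
    (hxbar : ∀ ω, xbar ω = (1 / (n : ℝ)) • ∑ i, prox i ((state ω).1
        + γ • (gradient (f i) (state ω).2 - gradient F (state ω).2)))
    (K : ℕ) (hK : 1 ≤ K) :
    (1 / (K : ℝ)) * (∑ k ∈ Finset.range K,
        ∑ ω : Fin k → Fin n × Bool,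
          (∏ j, (1 / (n : ℝ)) * (if (ω j).2 then p else 1 - p))
            * F (xbar (List.ofFn ω))) - Fstar
      ≤ ‖x0 - xstar‖ ^ 2 / (2 * γ * K) := by
  have hnpos : (0 : ℝ) < n := by exact_mod_cast hn
  have hKpos : (0 : ℝ) < K := by exact_mod_cast hK
  have hB : 8 * (δ ^ 2 * γ ^ 2) ≤ p ^ 2 * (p + 1) := by
    have hden : 0 < p ^ 2 * (p + 1) := by positivity
    have h1 : 2 * (3 - p) ^ 2 * (δ ^ 2 * γ ^ 2) ≤ p ^ 2 * (p + 1) := by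
      have e : (2 * (3 - p) ^ 2 / (p ^ 2 * (p + 1))) * δ ^ 2 * γ ^ 2
          = 2 * (3 - p) ^ 2 * (δ ^ 2 * γ ^ 2) / (p ^ 2 * (p + 1)) := by ring
      rwa [e, div_le_one hden] at hstep
    have h2 : 8 * (δ ^ 2 * γ ^ 2) ≤ 2 * (3 - p) ^ 2 * (δ ^ 2 * γ ^ 2) :=
      mul_le_mul_of_nonneg_right (by nlinarith) (by positivity)
    linarith
  set q : Fin n × Bool → ℝ := fun a => (1 / (n : ℝ)) * (if a.2 then p else 1 - p) with hqdef
  set Φ : List (Fin n × Bool) → ℝ := fun l =>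
    ‖(state l).1 - xstar‖ ^ 2 + (p / 2) * ‖(state l).1 - (state l).2‖ ^ 2 with hΦdef
  have hq : ∀ a, 0 ≤ q a := by
    intro a
    simp only [hqdef]
    have : 0 ≤ 1 - p := by linarith
    split_ifs <;> positivity
  have hq1 : ∑ a, q a = 1 := by
    simp only [hqdef, Fintype.sum_prod_type, Fintype.sum_bool, if_true,
      Bool.false_eq_true, if_false, ← mul_add, add_sub_cancel, sum_const, card_univ,
      Fintype.card_fin, nsmul_eq_mul]
    field_simp
  have hdesc : ∀ l, 2 * γ * (F (xbar l) - Fstar) + ∑ a, q a * Φ (l ++ [a]) ≤ Φ l := by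
    intro l
    have h := lsvrp_potential_descent hn hγ hp0 hp1 hdiff hF hcvx hsim hB
      (state l).1 (state l).2 xstar (xbar l)
      (fun i => prox i ((state l).1
        + γ • (gradient (f i) (state l).2 - gradient F (state l).2)))
      (fun i z => hprox i _ z) (hxbar l)
    have e : ∑ a, q a * Φ (l ++ [a]) = (1 / (n : ℝ)) * ∑ i,
        (‖prox i ((state l).1 + γ • (gradient (f i) (state l).2 - gradient F (state l).2))
            - xstar‖ ^ 2
          + (p / 2) * (1 - p) *
            ‖prox i ((state l).1 + γ • (gradient (f i) (state l).2 - gradient F (state l).2))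
              - (state l).2‖ ^ 2) := by
      rw [Fintype.sum_prod_type, mul_sum]
      refine sum_congr rfl fun i _ => ?_
      simp only [hqdef, hΦdef, Fintype.sum_bool, hstateS, if_true, sub_self, norm_zero,
        Bool.false_eq_true, if_false]
      ring
    rw [e, hFstar]
    refine le_of_mul_le_mul_left ?_ hnpos
    rw [mul_add, ← mul_assoc (n : ℝ) (1 / (n : ℝ)), mul_one_div_cancel hnpos.ne', one_mul]
    exact h
  have htel := telescope_histories hq hq1 hdesc K
  have hΦK : 0 ≤ histExp q K Φ :=
    sum_nonneg fun ω _ => mul_nonneg (prod_nonneg fun j _ => hq _) (by positivity)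
  have hΦ0 : Φ [] = ‖x0 - xstar‖ ^ 2 := by simp [hΦdef, hstate0]
  rw [hΦ0] at htel
  change (1 / (K : ℝ)) * (∑ k ∈ range K, histExp q k fun l => F (xbar l)) - Fstar ≤ _
  rw [le_div_iff₀ (by positivity)]
  have e : (1 / (K : ℝ) * (∑ k ∈ range K, histExp q k fun l => F (xbar l)) - Fstar)
      * (2 * γ * K)
      = 2 * γ * (∑ k ∈ range K, (histExp q k fun l => F (xbar l)) - K * Fstar) := by
    field_simp
  rw [e]
  linarith
end

section
/- Let each f_i : ℝ^d → ℝ (i = 1,…,n) be differentiable and μ-strongly convex with μ > 0, satisfy the Hessian similarity condition with constant δ ≥ μ (so that the stepsize below is admissible), let f = (1/n)∑ f_i with minimizer x_*, let p ∈ (0,1], and set the stepsize γ = (1/δ)·(p/(3−p))·√((p+1)/2). Let (x_k, w_k)_{k≥0} be the L-SVRP process started from x_0 = w_0. Then for every ε > 0 and every integer K with K ≥ (1 + (1/p)(3δ/μ + 4))·log(‖x_0 − x_*‖²/ε), one has E[‖x_K − x_*‖²] ≤ ε. -/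
/-!
The proof is a Lyapunov argument with the potential
`Ψ(x, w) = ‖x - x⋆‖² + (p/2)‖x - w‖²`, which contracts in conditional expectation by the factor
`1 / (1 + r)`, where `r = pμ / (3δ + 4μ)` is the inverse of `(1/p)(3δ/μ + 4)`.

For a single step from `(x, w)`, let `x⁺ᵢ` be the new iterate when the index `i` is drawn and let
`y` be the average of the `x⁺ᵢ` over `i`. Hessian similarity only controls averages at points that do
not depend on `i`, so strong convexity of `fᵢ` is used twice: from `x⁺ᵢ` to `x⋆` (where optimality of
the proximal step gives `γ∇fᵢ(x⁺ᵢ)`) and from the deterministic point `y` to `x⁺ᵢ`. After averaging,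
the terms linear in `x⁺ᵢ - y` with a fixed coefficient vanish, and the remaining cross term
`⟪∇fᵢ(y) - ∇f(y) - ∇fᵢ(w) + ∇f(w), x⁺ᵢ - y⟫` is absorbed by the variance `V` of `x⁺ᵢ` and by
`γ²δ²‖y - w‖²` (`step_average`). The term `-‖x - y‖²` together with the `‖x - w‖²` part of the
potential pays for `‖y - w‖²` (`step_contraction`); the required scalar inequality is
`stepsize_inequality`. Iterating over histories is `sum_histories_le`.
-/

open RealInnerProductSpace Finset

/-! ### Expectation over histories -/

/-- If the weighted average of `Ψ` over one more draw is at most `ρ Ψ`, then the weighted average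
over all histories of length `K` is at most `ρ ^ K` times the initial value. -/
lemma sum_histories_le {α : Type*} [Fintype α] (q : α → ℝ) (hq : ∀ a, 0 ≤ q a)
    (Ψ : List α → ℝ) (ρ : ℝ) (hρ : 0 ≤ ρ)
    (hstep : ∀ l, ∑ a, q a * Ψ (l ++ [a]) ≤ ρ * Ψ l) (K : ℕ) :
    ∑ ω : Fin K → α, (∏ k, q (ω k)) * Ψ (List.ofFn ω) ≤ ρ ^ K * Ψ [] := by
  induction K with
  | zero => simp
  | succ K ih =>
    have e : ∑ ω : Fin (K + 1) → α, (∏ k, q (ω k)) * Ψ (List.ofFn ω)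
        = ∑ ω : Fin K → α, (∏ k, q (ω k)) * ∑ a, q a * Ψ (List.ofFn ω ++ [a]) := by
      rw [← (Fin.snocEquiv (fun _ : Fin (K + 1) => α)).sum_comp, Fintype.sum_prod_type,
        Finset.sum_comm]
      refine Finset.sum_congr rfl fun ω _ => ?_
      rw [Finset.mul_sum]
      refine Finset.sum_congr rfl fun a _ => ?_
      rw [Fin.prod_univ_castSucc, List.ofFn_succ']
      simp [Fin.snocEquiv, List.concat_eq_append, mul_assoc]
    rw [e]
    calc _ ≤ ∑ ω : Fin K → α, (∏ k, q (ω k)) * (ρ * Ψ (List.ofFn ω)) :=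
          Finset.sum_le_sum fun ω _ =>
            mul_le_mul_of_nonneg_left (hstep _) (Finset.prod_nonneg fun k _ => hq _)
      _ = ρ * ∑ ω : Fin K → α, (∏ k, q (ω k)) * Ψ (List.ofFn ω) := by
          rw [Finset.mul_sum]
          exact Finset.sum_congr rfl fun ω _ => by ring
      _ ≤ ρ * (ρ ^ K * Ψ []) := mul_le_mul_of_nonneg_left ih hρ
      _ = _ := by ring

/-! ### Scalar inequalities for the stepsize -/

/-- With `G = γ²δ²` and `a = 1 - (p/2)(1 + r)(1 - p)`, the worst admissible rate is `r = p/7`. -/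
lemma stepsize_inequality (p r a G : ℝ) (hp0 : 0 < p) (hp1 : p ≤ 1) (hr : r ≤ p / 7)
    (ha : a = 1 - p / 2 * (1 + r) * (1 - p))
    (hG : G * (2 * (3 - p) ^ 2) = p ^ 2 * (p + 1)) :
    0 < a ∧ G / a + (1 - a) ≤ (p / 2) / (1 + p / 2) := by
  set a₀ : ℝ := 1 - p / 2 * (1 + p / 7) * (1 - p) with ha₀
  have h1p : 0 ≤ 1 - p := by linarith
  have haa : a₀ ≤ a := by
    have : 0 ≤ p / 2 * (p / 7 - r) * (1 - p) :=
      mul_nonneg (mul_nonneg (by linarith) (by linarith)) h1p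
    rw [ha, ha₀]; linarith
  have ha₀pos : 0 < a₀ := by
    rw [ha₀]; nlinarith [mul_nonneg hp0.le h1p, mul_nonneg (mul_nonneg hp0.le h1p) hp0.le]
  have hapos : 0 < a := lt_of_lt_of_le ha₀pos haa
  refine ⟨hapos, ?_⟩
  have h3 : 0 < 2 * (3 - p) ^ 2 := by nlinarith
  have hGnn : 0 ≤ G := by
    by_contra h
    push Not at h
    have := mul_neg_of_neg_of_pos h h3
    nlinarith [mul_nonneg (sq_nonneg p) (by linarith : (0:ℝ) ≤ p + 1)]
  have hmono : G / a + (1 - a) ≤ G / a₀ + (1 - a₀) := by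
    have := div_le_div_of_nonneg_left hGnn ha₀pos haa
    linarith
  refine hmono.trans ?_
  have key : G * (2 + p) ≤ a₀ * (p ^ 2 * (5 / 14 + 4 * p / 7 + p ^ 2 / 14)) := by
    have hG' : G = p ^ 2 * (p + 1) / (2 * (3 - p) ^ 2) := by
      rw [eq_div_iff h3.ne']; exact hG
    have poly : (p + 1) * (2 + p)
        ≤ a₀ * (5 / 14 + 4 * p / 7 + p ^ 2 / 14) * (2 * (3 - p) ^ 2) := by
      -- expansion of the difference in the Bernstein basis of degree 7: all coefficients are positive
      have hb : 0 ≤ 31/7 * p ^ 0 * (1 - p) ^ 7 + 431/14 * p ^ 1 * (1 - p) ^ 6 + 4195/49 * p ^ 2 * (1 - p) ^ 5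
          + 6224/49 * p ^ 3 * (1 - p) ^ 4 + 5440/49 * p ^ 4 * (1 - p) ^ 3 + 2841/49 * p ^ 5 * (1 - p) ^ 2
          + 117/7 * p ^ 6 * (1 - p) ^ 1 + 2 * p ^ 7 * (1 - p) ^ 0 := by
        positivity
      rw [ha₀]
      linarith
    rw [hG', div_mul_eq_mul_div, div_le_iff₀ h3]
    nlinarith [mul_le_mul_of_nonneg_left poly (sq_nonneg p)]
  have hfrac : (p / 2) / (1 + p / 2) = 1 - 2 / (2 + p) := by field_simp; ring
  have hsplit : a₀ - 2 / (2 + p)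
      = p ^ 2 * (5 / 14 + 4 * p / 7 + p ^ 2 / 14) / (2 + p) := by
    rw [ha₀]; field_simp; ring
  have : G / a₀ ≤ p ^ 2 * (5 / 14 + 4 * p / 7 + p ^ 2 / 14) / (2 + p) := by
    rw [div_le_div_iff₀ ha₀pos (by linarith)]
    linarith
  linarith

/-- The stepsize satisfies `2γμ ≥ r`. -/
lemma rate_le (p μ δ γ : ℝ) (hμ : 0 < μ) (hδμ : μ ≤ δ) (hp0 : 0 < p) (hp1 : p ≤ 1)
    (hγ : γ = (1 / δ) * (p / (3 - p)) * Real.sqrt ((p + 1) / 2)) :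
    p * μ / (3 * δ + 4 * μ) ≤ 2 * (γ * μ) := by
  have hδ : 0 < δ := by linarith
  have hs : 1 / 2 ≤ Real.sqrt ((p + 1) / 2) := Real.le_sqrt_of_sq_le (by linarith)
  have h1 : p / 3 ≤ p / (3 - p) :=
    div_le_div_of_nonneg_left hp0.le (by linarith) (by linarith)
  have h2 : p / 6 / δ ≤ γ := by
    have : p / 3 * (1 / 2) ≤ p / (3 - p) * Real.sqrt ((p + 1) / 2) :=
      mul_le_mul h1 hs (by norm_num) (div_nonneg hp0.le (by linarith))
    calc p / 6 / δ = 1 / δ * (p / 3 * (1 / 2)) := by ring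
      _ ≤ 1 / δ * (p / (3 - p) * Real.sqrt ((p + 1) / 2)) :=
        mul_le_mul_of_nonneg_left this (by positivity)
      _ = γ := by rw [hγ]; ring
  calc p * μ / (3 * δ + 4 * μ) ≤ p * μ / (3 * δ) :=
        div_le_div_of_nonneg_left (by positivity) (by positivity) (by linarith)
    _ = 2 * (p / 6 / δ * μ) := by field_simp; norm_num
    _ ≤ _ := by
      have := mul_le_mul_of_nonneg_right h2 hμ.le
      linarith

/-- The passage from the linear rate `1 / (1 + 1/T)` to the iteration count `(1 + T) log (D / ε)`. -/
lemma pow_rate_le (T D ε : ℝ) (K : ℕ) (hT : 0 < T) (hD : 0 ≤ D) (hε : 0 < ε)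
    (hK : (1 + T) * Real.log (D / ε) ≤ K) : ((1 + 1 / T)⁻¹) ^ K * D ≤ ε := by
  rcases hD.eq_or_lt with h | hD
  · rw [← h]; simpa using hε.le
  have hpos : (0:ℝ) < 1 + 1 / T := by positivity
  have hlog : 1 / (1 + T) ≤ Real.log (1 + 1 / T) := by
    have := Real.one_sub_inv_le_log_of_pos hpos
    have e : 1 - (1 + 1 / T)⁻¹ = 1 / (1 + T) := by field_simp; ring
    linarith
  have h1 : Real.log (D / ε) ≤ K * Real.log (1 + 1 / T) := by
    have h2 : Real.log (D / ε) ≤ K * (1 / (1 + T)) := by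
      rw [mul_one_div, le_div_iff₀ (by positivity)]; linarith
    exact h2.trans (mul_le_mul_of_nonneg_left hlog (Nat.cast_nonneg _))
  rw [← Real.log_pow, Real.log_le_log_iff (by positivity) (by positivity)] at h1
  rw [inv_pow, inv_mul_le_iff₀ (by positivity)]
  rw [div_le_iff₀ hε] at h1
  exact h1

/-! ### First-order conditions -/

section

variable {E : Type*} [NormedAddCommGroup E] [InnerProductSpace ℝ E]

lemma gradient_eq_zero_of_min [CompleteSpace E] (F : E → ℝ) (z : E) (hz : ∀ x, F z ≤ F x) :
    gradient F z = 0 := by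
  have h : IsLocalMin F z := Filter.Eventually.of_forall hz
  simp [gradient, h.fderiv_eq_zero]

lemma prox_optimality [CompleteSpace E] (f : E → ℝ) (hf : Differentiable ℝ f) (γ : ℝ) (u z : E)
    (hz : ∀ x, γ * f z + (1 / 2) * ‖z - u‖ ^ 2 ≤ γ * f x + (1 / 2) * ‖x - u‖ ^ 2) :
    γ • gradient f z = u - z := by
  have h : IsLocalMin (fun x => γ * f x + (1 / 2) * ‖x - u‖ ^ 2) z :=
    Filter.Eventually.of_forall hz
  have hd : HasFDerivAt (fun x => γ * f x + (1 / 2) * ‖x - u‖ ^ 2)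
      (γ • (innerSL ℝ (gradient f z)) + (1 / 2 : ℝ) • (2 • (innerSL ℝ (z - u)))) z := by
    have h1 : HasFDerivAt f (innerSL ℝ (gradient f z)) z :=
      (hf z).hasGradientAt.hasFDerivAt
    have h2 : HasFDerivAt (fun x => ‖x - u‖ ^ 2) (2 • (innerSL ℝ (z - u))) z := by
      simpa using ((hasFDerivAt_id z).sub_const u).norm_sq
    exact (h1.const_mul γ).add (h2.const_mul (1 / 2))
  have h0 := h.hasFDerivAt_eq_zero hd
  have h1 : γ • gradient f z - (u - z) = 0 := by
    refine ext_inner_right ℝ fun v => ?_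
    have := DFunLike.congr_fun h0 v
    simp only [add_apply, smul_apply, innerSL_apply_apply,
      smul_eq_mul, nsmul_eq_mul, zero_apply] at this
    simp only [inner_sub_left, inner_smul_left, inner_zero_left] at this ⊢
    simp at this ⊢
    linarith
  exact sub_eq_zero.mp h1

lemma gradient_average [CompleteSpace E] {n : ℕ} (f : Fin n → E → ℝ)
    (hf : ∀ i, Differentiable ℝ (f i)) (c : ℝ) (x : E) :
    gradient (fun x => c * ∑ i, f i x) x = c • ∑ i, gradient (f i) x := by
  have h : HasFDerivAt (fun x => c * ∑ i, f i x) (c • ∑ i, fderiv ℝ (f i) x) x := by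
    refine HasFDerivAt.const_mul ?_ c
    exact HasFDerivAt.fun_sum fun i _ => (hf i x).hasFDerivAt
  simp [gradient, h.fderiv]

/-! ### One step of the method -/

/-- Bias-variance decomposition around the mean `y`. -/
lemma sum_norm_sub_sq {n : ℕ} (z : Fin n → E) (y v : E) (hy : ∑ i, (z i - y) = 0) :
    ∑ i, ‖z i - v‖ ^ 2 = n * ‖y - v‖ ^ 2 + ∑ i, ‖z i - y‖ ^ 2 := by
  have h : ∀ i, ‖z i - v‖ ^ 2 = ‖y - v‖ ^ 2 + ‖z i - y‖ ^ 2 + 2 * ⟪z i - y, y - v⟫ := by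
    intro i
    rw [← sub_add_sub_cancel (z i) y v, norm_add_sq_real]; ring
  simp only [h, Finset.sum_add_distrib, ← Finset.mul_sum, ← sum_inner, hy]
  simp

/-- The estimate for a fixed index: `g`, `gy`, `gw` are the gradients of `fᵢ` at the new iterate
`z`, at the mean `y` and at `w`, while `Gy`, `Gw` are those of the average `f`. -/
lemma step_index (γ μ a : ℝ) (hγ : 0 ≤ γ) (ha : 0 < a) (x z y s g gy gw Gy Gw : E)
    (fs fz fy : ℝ)
    (hopt : γ • g = x + γ • (gw - Gw) - z)
    (h1 : fs ≥ fz + ⟪g, s - z⟫ + μ / 2 * ‖z - s‖ ^ 2)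
    (h2 : fz ≥ fy + ⟪gy, z - y⟫ + μ / 2 * ‖y - z‖ ^ 2) :
    (1 + γ * μ) * ‖z - s‖ ^ 2 + γ * μ * ‖z - y‖ ^ 2 + ‖z - x‖ ^ 2 - ‖x - s‖ ^ 2
      + 2 * γ * ⟪gw - Gw, s - y⟫ + 2 * γ * ⟪Gy, z - y⟫
      - γ ^ 2 / a * ‖gy - gw - (Gy - Gw)‖ ^ 2 - a * ‖z - y‖ ^ 2 ≤ 2 * γ * (fs - fy) := by
  have young : 0 ≤ γ ^ 2 / a * ‖gy - gw - (Gy - Gw)‖ ^ 2 + a * ‖z - y‖ ^ 2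
      + 2 * γ * ⟪gy - gw - (Gy - Gw), z - y⟫ := by
    have h : 0 ≤ ‖γ • (gy - gw - (Gy - Gw)) + a • (z - y)‖ ^ 2 / a := by positivity
    rw [norm_add_sq_real, norm_smul, norm_smul, mul_pow, mul_pow, inner_smul_left,
      inner_smul_right, Real.norm_eq_abs, Real.norm_eq_abs, sq_abs, sq_abs] at h
    have e : (γ ^ 2 * ‖gy - gw - (Gy - Gw)‖ ^ 2
        + 2 * (γ * (a * ⟪gy - gw - (Gy - Gw), z - y⟫)) + a ^ 2 * ‖z - y‖ ^ 2) / a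
        = γ ^ 2 / a * ‖gy - gw - (Gy - Gw)‖ ^ 2 + a * ‖z - y‖ ^ 2
      + 2 * γ * ⟪gy - gw - (Gy - Gw), z - y⟫ := by
      field_simp; ring
    rw [← e]; exact h
  have hg : γ * ⟪g, s - z⟫ = ⟪x - z, s - z⟫ + γ * ⟪gw - Gw, s - z⟫ := by
    rw [← real_inner_smul_left, hopt, ← real_inner_smul_left, ← inner_add_left]
    congr 1; abel
  have hpol : 2 * ⟪x - z, s - z⟫ = ‖z - x‖ ^ 2 + ‖z - s‖ ^ 2 - ‖x - s‖ ^ 2 := by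
    have := norm_sub_sq_real (x - z) (s - z)
    rw [sub_sub_sub_cancel_right] at this
    rw [norm_sub_rev z x, norm_sub_rev z s]; linarith
  have hsp : ⟪gw - Gw, s - z⟫ = ⟪gw - Gw, s - y⟫ - ⟪gw - Gw, z - y⟫ := by
    rw [← inner_sub_right]; congr 1; abel
  have hsp2 : ⟪gy - gw - (Gy - Gw), z - y⟫
      = ⟪gy, z - y⟫ - ⟪Gy, z - y⟫ - ⟪gw - Gw, z - y⟫ := by
    rw [← inner_sub_left, ← inner_sub_left]; congr 1; abel
  rw [norm_sub_rev y z] at h2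
  rw [hsp2] at young
  have h12 := mul_le_mul_of_nonneg_left (add_le_add h1 h2) (by linarith : 0 ≤ 2 * γ)
  have hsg : γ * ⟪gw - Gw, s - z⟫ = γ * ⟪gw - Gw, s - y⟫ - γ * ⟪gw - Gw, z - y⟫ := by
    rw [hsp]; ring
  linarith

/-- The averaged one-step estimate; the sum of `‖z i - y‖ ^ 2` is `n` times the
variance of the new iterate. -/
lemma step_average {n : ℕ} (f : Fin n → E → ℝ) (g : Fin n → E → E) (G : E → E)
    (γ μ δ a : ℝ) (hγ : 0 ≤ γ) (ha : 0 < a)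
    (hG : ∀ x, ∑ i, (g i x - G x) = 0)
    (hsc : ∀ i, ∀ x y : E, f i y ≥ f i x + ⟪g i x, y - x⟫ + μ / 2 * ‖x - y‖ ^ 2)
    (hsim : ∀ x y : E, ∑ i, ‖g i x - g i y - (G x - G y)‖ ^ 2 ≤ n * (δ ^ 2 * ‖x - y‖ ^ 2))
    (s : E) (hs : G s = 0) (x w y : E) (z : Fin n → E)
    (hopt : ∀ i, γ • g i (z i) = x + γ • (g i w - G w) - z i)
    (hy : ∑ i, (z i - y) = 0) :
    (1 + 2 * (γ * μ)) * ∑ i, ‖z i - s‖ ^ 2 + n * ‖y - x‖ ^ 2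
      + (1 - a) * ∑ i, ‖z i - y‖ ^ 2
      ≤ n * ‖x - s‖ ^ 2 + n * ((γ * δ) ^ 2 / a * ‖y - w‖ ^ 2) := by
  have hi := Finset.sum_le_sum fun i (_ : i ∈ Finset.univ) =>
    step_index γ μ a hγ ha x (z i) y s (g i (z i)) (g i y) (g i w) (G y) (G w) (f i s) (f i (z i))
      (f i y) (hopt i) (hsc i _ _) (hsc i _ _)
  simp only [Finset.sum_add_distrib, Finset.sum_sub_distrib, ← Finset.mul_sum, ← sum_inner,
    ← inner_sum] at hi
  rw [← Finset.sum_sub_distrib, ← Finset.sum_sub_distrib, hG, hy] at hi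
  -- strong convexity of the average at its minimiser
  have hmin : ∑ i, f i s + n * (μ / 2 * ‖y - s‖ ^ 2) ≤ ∑ i, f i y := by
    have h := Finset.sum_le_sum fun i (_ : i ∈ Finset.univ) => hsc i s y
    have hg0 : ∑ i, g i s = 0 := by simpa [hs] using hG s
    simp only [Finset.sum_add_distrib, ← sum_inner, hg0, inner_zero_left] at h
    simp only [Finset.sum_const, Finset.card_univ, Fintype.card_fin, nsmul_eq_mul, add_zero] at h
    rwa [norm_sub_rev y s]
  have hmin2 := mul_le_mul_of_nonneg_left hmin (by linarith : 0 ≤ 2 * γ)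
  have hV := mul_le_mul_of_nonneg_left (hsim y w) (by positivity : 0 ≤ γ ^ 2 / a)
  have e1 := sum_norm_sub_sq z y s hy
  have e2 := sum_norm_sub_sq z y x hy
  have e1' : γ * μ * ∑ i, ‖z i - s‖ ^ 2
      = γ * μ * (n * ‖y - s‖ ^ 2) + γ * μ * ∑ i, ‖z i - y‖ ^ 2 := by rw [e1]; ring
  have e3 : n * ((γ * δ) ^ 2 / a * ‖y - w‖ ^ 2)
      = γ ^ 2 / a * (n * (δ ^ 2 * ‖y - w‖ ^ 2)) := by ring
  simp only [inner_zero_left, inner_zero_right, Finset.sum_const, Finset.card_univ,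
    Fintype.card_fin, nsmul_eq_mul, mul_zero] at hi
  rw [e3]
  linarith

/-- Expected decrease of the potential, written with sums in place of averages. -/
lemma step_contraction {n : ℕ} (hn : 0 < n) (f : Fin n → E → ℝ) (g : Fin n → E → E) (G : E → E)
    (γ μ δ p r : ℝ) (hγ : 0 ≤ γ) (hp0 : 0 < p) (hp1 : p ≤ 1)
    (hr : r ≤ p / 7) (hrγ : r ≤ 2 * (γ * μ))
    (hγδ : (γ * δ) ^ 2 * (2 * (3 - p) ^ 2) = p ^ 2 * (p + 1))
    (hG : ∀ x, ∑ i, (g i x - G x) = 0)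
    (hsc : ∀ i, ∀ x y : E, f i y ≥ f i x + ⟪g i x, y - x⟫ + μ / 2 * ‖x - y‖ ^ 2)
    (hsim : ∀ x y : E, ∑ i, ‖g i x - g i y - (G x - G y)‖ ^ 2 ≤ n * (δ ^ 2 * ‖x - y‖ ^ 2))
    (s : E) (hs : G s = 0) (x w : E) (z : Fin n → E)
    (hopt : ∀ i, γ • g i (z i) = x + γ • (g i w - G w) - z i) :
    (1 + r) * (∑ i, ‖z i - s‖ ^ 2 + p / 2 * (1 - p) * ∑ i, ‖z i - w‖ ^ 2)
      ≤ n * (‖x - s‖ ^ 2 + p / 2 * ‖x - w‖ ^ 2) := by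
  have hn' : (n : ℝ) ≠ 0 := by positivity
  obtain ⟨a, ha⟩ : ∃ a, a = 1 - p / 2 * (1 + r) * (1 - p) := ⟨_, rfl⟩
  obtain ⟨hapos, hB⟩ := stepsize_inequality p r a _ hp0 hp1 hr ha hγδ
  obtain ⟨y, hyd⟩ : ∃ y : E, y = (1 / (n : ℝ)) • ∑ i, z i := ⟨_, rfl⟩
  have hy : ∑ i, (z i - y) = 0 := by
    rw [Finset.sum_sub_distrib, Finset.sum_const, Finset.card_univ, Fintype.card_fin, hyd,
      ← Nat.cast_smul_eq_nsmul ℝ, smul_smul, mul_one_div_cancel hn', one_smul, sub_self]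
  have hav := step_average f g G γ μ δ a hγ hapos hG hsc hsim s hs x w y z hopt hy
  have ew := sum_norm_sub_sq z y w hy
  -- `B‖y - w‖² ≤ ‖y - x‖² + c‖x - w‖²` whenever `B ≤ c / (1 + c)`, here with `c = p / 2`
  have hyw : ((γ * δ) ^ 2 / a + (1 - a)) * ‖y - w‖ ^ 2 ≤ ‖y - x‖ ^ 2 + p / 2 * ‖x - w‖ ^ 2 := by
    refine (mul_le_mul_of_nonneg_right hB (by positivity)).trans ?_
    rw [div_mul_eq_mul_div, div_le_iff₀ (by positivity)]
    have tri : ‖y - w‖ ^ 2 = ‖y - x‖ ^ 2 + 2 * ⟪y - x, x - w⟫ + ‖x - w‖ ^ 2 := by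
      rw [← norm_add_sq_real, sub_add_sub_cancel]
    have sq : 0 ≤ ‖(y - x) - (p / 2) • (x - w)‖ ^ 2 := by positivity
    rw [norm_sub_sq_real, norm_smul, mul_pow, Real.norm_eq_abs, sq_abs, inner_smul_right] at sq
    rw [tri]
    linarith
  have hyw' := mul_le_mul_of_nonneg_left hyw (Nat.cast_nonneg n : (0:ℝ) ≤ n)
  have hS : r * ∑ i, ‖z i - s‖ ^ 2 ≤ 2 * (γ * μ) * ∑ i, ‖z i - s‖ ^ 2 :=
    mul_le_mul_of_nonneg_right hrγ (Finset.sum_nonneg fun i _ => by positivity)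
  have e : (1 + r) * (∑ i, ‖z i - s‖ ^ 2 + p / 2 * (1 - p) * ∑ i, ‖z i - w‖ ^ 2)
      = (1 + r) * ∑ i, ‖z i - s‖ ^ 2
        + (1 - a) * (n * ‖y - w‖ ^ 2 + ∑ i, ‖z i - y‖ ^ 2) := by
    rw [ew, ha]; ring
  rw [e]
  linarith

end

/-- Corollary 3 of the paper (iteration complexity): with the stepsize
`γ = (1/δ)·(p/(3−p))·√((p+1)/2)`, after
`K ≥ (1 + (1/p)(3δ/μ + 4))·log(‖x_0 − x_*‖²/ε)` iterations of L-SVRP one has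
`E[‖x_K − x_*‖²] ≤ ε`. The process is modelled by the deterministic map `state`
applied to a finite history of (sampled index, Bernoulli coin) draws, and the
expectation is the weighted sum over all histories. -/
theorem lsvrp_iteration_complexity
    (d n : ℕ) (hn : 0 < n)
    (f : Fin n → EuclideanSpace ℝ (Fin d) → ℝ) (μ δ p γ : ℝ)
    (hμ : 0 < μ) (hδμ : δ ≥ μ) (hp0 : 0 < p) (hp1 : p ≤ 1)
    (hγ : γ = (1 / δ) * (p / (3 - p)) * Real.sqrt ((p + 1) / 2))
    (hdiff : ∀ i, Differentiable ℝ (f i))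
    (F : EuclideanSpace ℝ (Fin d) → ℝ)
    (hF : F = fun x => (1 / (n : ℝ)) * ∑ i, f i x)
    (hsc : ∀ i, ∀ x y : EuclideanSpace ℝ (Fin d),
      f i y ≥ f i x + ⟪gradient (f i) x, y - x⟫ + μ / 2 * ‖x - y‖ ^ 2)
    (hsim : ∀ x y : EuclideanSpace ℝ (Fin d),
      (1 / (n : ℝ)) * ∑ i, ‖gradient (f i) x - gradient (f i) y
          - (gradient F x - gradient F y)‖ ^ 2
        ≤ δ ^ 2 * ‖x - y‖ ^ 2)
    (xstar : EuclideanSpace ℝ (Fin d)) (hxstar : ∀ x, F xstar ≤ F x)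
    -- the proximity operator of `γ f_i`
    (prox : Fin n → EuclideanSpace ℝ (Fin d) → EuclideanSpace ℝ (Fin d))
    (hprox : ∀ i, ∀ x z : EuclideanSpace ℝ (Fin d),
      γ * f i (prox i x) + (1 / 2) * ‖prox i x - x‖ ^ 2
        ≤ γ * f i z + (1 / 2) * ‖z - x‖ ^ 2)
    -- the L-SVRP process, as a function of the history of random draws
    (x0 : EuclideanSpace ℝ (Fin d))
    (state : List (Fin n × Bool) →
      EuclideanSpace ℝ (Fin d) × EuclideanSpace ℝ (Fin d))
    (hstate0 : state [] = (x0, x0))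
    (hstateS : ∀ (ω : List (Fin n × Bool)) (i : Fin n) (b : Bool),
      state (ω ++ [(i, b)]) =
        (prox i ((state ω).1
            + γ • (gradient (f i) (state ω).2 - gradient F (state ω).2)),
         if b then
           prox i ((state ω).1
              + γ • (gradient (f i) (state ω).2 - gradient F (state ω).2))
         else (state ω).2)) :
    ∀ ε : ℝ, 0 < ε → ∀ K : ℕ,
      (K : ℝ) ≥ (1 + (1 / p) * (3 * δ / μ + 4))
          * Real.log (‖x0 - xstar‖ ^ 2 / ε) →
      ∑ ω : Fin K → Fin n × Bool,
          (∏ k, (1 / (n : ℝ)) * (if (ω k).2 then p else 1 - p))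
            * ‖(state (List.ofFn ω)).1 - xstar‖ ^ 2
        ≤ ε := by
  intro ε hε K hK
  have hδ : 0 < δ := by linarith
  have hn' : (0:ℝ) < n := by exact_mod_cast hn
  have h3p : 0 < 3 - p := by linarith
  have hγ0 : 0 ≤ γ := by rw [hγ]; positivity
  have hγδ : (γ * δ) ^ 2 * (2 * (3 - p) ^ 2) = p ^ 2 * (p + 1) := by
    have e : γ * δ = p / (3 - p) * Real.sqrt ((p + 1) / 2) := by rw [hγ]; field_simp
    rw [e, mul_pow, Real.sq_sqrt (by positivity)]
    field_simp
  have hGF : ∀ x, ∑ i, (gradient (f i) x - gradient F x) = 0 := by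
    intro x
    rw [Finset.sum_sub_distrib, Finset.sum_const, Finset.card_univ, Fintype.card_fin, hF,
      gradient_average f hdiff, ← Nat.cast_smul_eq_nsmul ℝ, smul_smul,
      mul_one_div_cancel hn'.ne', one_smul, sub_self]
  have hsim' : ∀ x y : EuclideanSpace ℝ (Fin d),
      ∑ i, ‖gradient (f i) x - gradient (f i) y - (gradient F x - gradient F y)‖ ^ 2
        ≤ n * (δ ^ 2 * ‖x - y‖ ^ 2) := by
    intro x y
    have := mul_le_mul_of_nonneg_left (hsim x y) hn'.le
    rwa [← mul_assoc, mul_one_div_cancel hn'.ne', one_mul] at this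
  obtain ⟨r, hr⟩ : ∃ r, r = p * μ / (3 * δ + 4 * μ) := ⟨_, rfl⟩
  have hr0 : 0 < r := by rw [hr]; positivity
  have hr7 : r ≤ p / 7 := by
    rw [hr, div_le_div_iff₀ (by positivity) (by norm_num)]
    nlinarith
  have hrγ : r ≤ 2 * (γ * μ) := hr ▸ rate_le p μ δ γ hμ hδμ hp0 hp1 hγ
  have hrT : 1 / (1 / p * (3 * δ / μ + 4)) = r := by rw [hr]; field_simp
  let Ψ : List (Fin n × Bool) → ℝ := fun l =>
    ‖(state l).1 - xstar‖ ^ 2 + p / 2 * ‖(state l).1 - (state l).2‖ ^ 2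
  have hstep : ∀ l, ∑ a : Fin n × Bool,
      ((1 / (n : ℝ)) * (if a.2 then p else 1 - p)) * Ψ (l ++ [a]) ≤ (1 + r)⁻¹ * Ψ l := by
    intro l
    obtain ⟨z, hz⟩ : ∃ z : Fin n → EuclideanSpace ℝ (Fin d), z = fun i => prox i ((state l).1
            + γ • (gradient (f i) (state l).2 - gradient F (state l).2)) := ⟨_, rfl⟩
    have hc := step_contraction hn f (fun i => gradient (f i)) (gradient F) γ μ δ p r hγ0 hp0 hp1
      hr7 hrγ hγδ hGF hsc hsim' xstar (gradient_eq_zero_of_min F xstar hxstar) (state l).1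
      (state l).2 z (fun i => by
        rw [hz]; exact prox_optimality (f i) (hdiff i) γ _ _ (hprox i _))
    have e : ∑ a : Fin n × Bool,
        ((1 / (n : ℝ)) * (if a.2 then p else 1 - p)) * Ψ (l ++ [a])
        = (1 / (n : ℝ)) * (∑ i, ‖z i - xstar‖ ^ 2
          + p / 2 * (1 - p) * ∑ i, ‖z i - (state l).2‖ ^ 2) := by
      rw [Fintype.sum_prod_type, Finset.mul_sum, ← Finset.sum_add_distrib, Finset.mul_sum]
      refine Finset.sum_congr rfl fun i _ => ?_
      simp only [Fintype.sum_bool, Ψ, hstateS, hz]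
      simp
      ring
    rw [e, inv_mul_eq_div, le_div_iff₀ (by positivity), one_div, mul_assoc,
      inv_mul_le_iff₀ hn', mul_comm]
    exact hc
  have hq : ∀ a : Fin n × Bool, 0 ≤ (1 / (n : ℝ)) * (if a.2 then p else 1 - p) := by
    intro a
    refine mul_nonneg (by positivity) ?_
    split_ifs <;> linarith
  have hsum := sum_histories_le _ hq Ψ (1 + r)⁻¹ (by positivity) hstep K
  have hΨ0 : Ψ [] = ‖x0 - xstar‖ ^ 2 := by simp [Ψ, hstate0]
  calc _ ≤ ∑ ω : Fin K → Fin n × Bool,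
          (∏ k, (1 / (n : ℝ)) * (if (ω k).2 then p else 1 - p)) * Ψ (List.ofFn ω) := by
        refine Finset.sum_le_sum fun ω _ =>
          mul_le_mul_of_nonneg_left ?_ (Finset.prod_nonneg fun k _ => hq _)
        exact le_add_of_nonneg_right (by positivity)
    _ ≤ (1 + r)⁻¹ ^ K * ‖x0 - xstar‖ ^ 2 := hΨ0 ▸ hsum
    _ ≤ ε := by
        rw [← hrT]
        exact pow_rate_le _ _ ε K (by positivity) (by positivity) hε hK
end
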